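/- Let n be a positive integer, a ∈ ℝ, and s = (s_1,…,s_d) ∈ ℕ^d with weight |s| = s_1 + … + s_d and partial sums |s|_r = s_1 + … + s_r (|s|_0 = 0). For indices n ≥ n_1 ≥ … ≥ n_{|s|} ≥ 1, set Q(s) := Σ_{r=1}^{d} (n_{|s|_{r−1}+1} − n_{|s|_r}). Then (1/(n+1)) · Σ_{k=1}^{n} ζ*_k(s; a) = Σ_{n ≥ n_1 ≥ … ≥ n_{|s|+1} ≥ 1} [ C(n_{|s|}, n_{|s|+1}) / C(Q(s)+n_{|s|}, n_{|s|+1}) ] · a^{n_{|s|+1}} / ( (Q(s)+n_{|s|}+1) · n_1 ⋯ n_{|s|} ). -/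

import Mathlib

/-- `ent m α` is the entry `n_{α+1}` (0-indexed access) of the index tuple `m`,
with junk value `1` out of range. -/
def ent {L : ℕ} (m : Fin L → ℕ) (α : ℕ) : ℕ :=
  if h : α < L then m ⟨α, h⟩ else 1

/-- The finite set of index tuples `(n₁,…,n_L)` with `n ≥ n₁ ≥ n₂ ≥ ⋯ ≥ n_L ≥ 1`. -/
def Idx (n L : ℕ) : Finset (Fin L → ℕ) :=
  (Fintype.piFinset fun _ : Fin L => Finset.Icc 1 n).filter
    fun m => ∀ i j : Fin L, i ≤ j → m j ≤ m i

/-- Generalized multiple harmonic-star value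
`ζ*_k(s₁,…,s_d; a) = ∑_{k ≥ n₁ ≥ ⋯ ≥ n_d ≥ 1} a^{n_d}/(n₁^{s₁} ⋯ n_d^{s_d})`. -/
noncomputable def zetaStarK (k : ℕ) (s : List ℕ) (a : ℝ) : ℝ :=
  ∑ m ∈ Idx k s.length,
    a ^ ent m (s.length - 1) / ∏ i : Fin s.length, (m i : ℝ) ^ s.get i

/-- Mneimneh-like sum
`M_n^{(s₁,…,s_d)}(a,p) = ∑_{k=1}^n C(n,k)·p^k·(1-p)^{n-k}·ζ*_k(s;a)`. -/
noncomputable def M (n : ℕ) (s : List ℕ) (a p : ℝ) : ℝ :=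
  ∑ k ∈ Finset.Icc 1 n, (n.choose k : ℝ) * p ^ k * (1 - p) ^ (n - k) * zetaStarK k s a

/-- `Q(s)` as a function of the summation indices `n₁, n₂, …` (0-indexed via `ent`):
`Q(s) = ∑_{r=1}^{d} (n_{|s|_{r-1}+1} − n_{|s|_r})`. -/
def Qs (s : List ℕ) {L : ℕ} (t : Fin L → ℕ) : ℕ :=
  ∑ r ∈ Finset.range s.length,
    (ent t ((s.take r).sum) - ent t ((s.take (r + 1)).sum - 1))

/-! Taking the binomial transform with parameter `p` intertwines the sum `∑_{k=1}^n q^{n-k} h(k)/k`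
of ratio `q` with the one of ratio `1 - p + p q`, by Pascal's rule and absorption. A harmonic-star
value is built from the sequence `a^k` by such sums, an entry `e` of the exponent tuple contributing
one of ratio `1` (a summation) and `e - 1` of ratio `0` (divisions by the index). The transform
leaves the former alone and turns the latter into sums of ratio `1 - p`, whose weights telescope
inside each block to `(1 - p)^Q`. This expands the Mneimneh sum `M n s a p`; integrating over
`0 ≤ p ≤ 1` turns its binomial weights into `1/(n+1)` and the expanded terms into Beta integrals. -/

open Finset

section Operators

variable {K : Type*} [Field K]

/-- The operator `h ↦ (n ↦ ∑_{k=1}^n C(n,k) p^k (1-p)^{n-k} h(k))`. The value `h 0` is left out, so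
that `M n s a p` is by definition the transform of `k ↦ zetaStarK k s a`. -/
def binomialTransform (p : K) (h : ℕ → K) (n : ℕ) : K :=
  ∑ k ∈ Icc 1 n, (n.choose k : K) * p ^ k * (1 - p) ^ (n - k) * h k

/-- The operator `h ↦ (n ↦ ∑_{k=1}^n q^{n-k} h(k)/k)`: ratio `1` gives harmonic partial sums and
ratio `0` gives division by `n`. -/
def discountedSum (q : K) (h : ℕ → K) (n : ℕ) : K :=
  ∑ k ∈ Icc 1 n, q ^ (n - k) * (h k / k)

/-- The operator contributed by one entry `e ≥ 1` of the exponent tuple: `e` nested harmonic sums,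
discounted by `q` between consecutive indices of the block. -/
def blockOperator (q : K) (e : ℕ) (h : ℕ → K) : ℕ → K :=
  discountedSum 1 ((discountedSum q)^[e - 1] h)

lemma discountedSum_apply_zero (q : K) (h : ℕ → K) : discountedSum q h 0 = 0 := by
  simp [discountedSum]

lemma discountedSum_apply_succ (q : K) (h : ℕ → K) (n : ℕ) :
    discountedSum q h (n + 1) = q * discountedSum q h n + h (n + 1) / ((n + 1 : ℕ) : K) := by
  rw [discountedSum, sum_Icc_succ_top (by omega), discountedSum, mul_sum _ _ q, Nat.sub_self,
    pow_zero, one_mul]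
  congr 1
  refine sum_congr rfl fun k hk => ?_
  rw [Nat.sub_add_comm (mem_Icc.1 hk).2, pow_succ']
  ring

lemma discountedSum_zero (h : ℕ → K) (n : ℕ) : discountedSum 0 h n = h n / n := by
  cases n with
  | zero => simp [discountedSum_apply_zero]
  | succ n => rw [discountedSum_apply_succ, zero_mul, zero_add]

lemma iterate_discountedSum_zero (e : ℕ) (h : ℕ → K) (n : ℕ) :
    (discountedSum 0)^[e] h n = h n / (n : K) ^ e := by
  induction e with
  | zero => simp
  | succ e ih => rw [Function.iterate_succ_apply', discountedSum_zero, ih, div_div, pow_succ]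

lemma blockOperator_zero {e : ℕ} (he : 1 ≤ e) (h : ℕ → K) (n : ℕ) :
    blockOperator 0 e h n = ∑ k ∈ Icc 1 n, h k / (k : K) ^ e := by
  rw [blockOperator, discountedSum]
  refine sum_congr rfl fun k _ => ?_
  rw [one_pow, one_mul, iterate_discountedSum_zero, div_div, ← pow_succ, Nat.sub_add_cancel he]

lemma blockOperator_one (q : K) (h : ℕ → K) : blockOperator q 1 h = discountedSum 1 h := rfl

lemma blockOperator_add_two (q : K) (e : ℕ) (h : ℕ → K) :
    blockOperator q (e + 2) h = blockOperator q (e + 1) (discountedSum q h) := rfl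

lemma binomialTransform_eq_sum_range (p : K) (h : ℕ → K) (n : ℕ) :
    binomialTransform p h n =
      ∑ k ∈ range n,
        (n.choose (k + 1) : K) * p ^ (k + 1) * (1 - p) ^ (n - (k + 1)) * h (k + 1) := by
  rw [binomialTransform, range_eq_Ico, ← Ico_add_one_right_eq_Icc, sum_Ico_add'
    (fun k => (n.choose k : K) * p ^ k * (1 - p) ^ (n - k) * h k)]

lemma binomialTransform_eq_sum_range_succ (p : K) {h : ℕ → K} (h₀ : h 0 = 0) (n : ℕ) :
    binomialTransform p h n =
      ∑ k ∈ range (n + 1), (n.choose k : K) * p ^ k * (1 - p) ^ (n - k) * h k := by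
  rw [binomialTransform_eq_sum_range, sum_range_succ', h₀, mul_zero, add_zero]

lemma binomialTransform_succ (p : K) (h : ℕ → K) (n : ℕ) :
    binomialTransform p h (n + 1) = (1 - p) * binomialTransform p h n +
      p * ∑ k ∈ range (n + 1), (n.choose k : K) * p ^ k * (1 - p) ^ (n - k) * h (k + 1) := by
  have extend : (1 - p) * binomialTransform p h n = ∑ k ∈ range (n + 1),
      (n.choose (k + 1) : K) * p ^ (k + 1) * (1 - p) ^ (n - k) * h (k + 1) := by
    rw [sum_range_succ, Nat.choose_succ_self, binomialTransform_eq_sum_range, mul_sum]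
    simp only [Nat.cast_zero, zero_mul, add_zero]
    refine sum_congr rfl fun k hk => ?_
    rw [show n - k = n - (k + 1) + 1 by have := mem_range.1 hk; omega, pow_succ (1 - p)]
    ring
  rw [extend, mul_sum, ← sum_add_distrib, binomialTransform_eq_sum_range]
  refine sum_congr rfl fun k _ => ?_
  rw [Nat.choose_succ_succ, Nat.add_sub_add_right]
  push_cast
  ring

variable [CharZero K]

lemma binomialTransform_succ_div (p : K) (h : ℕ → K) (n : ℕ) :
    binomialTransform p h (n + 1) / ((n + 1 : ℕ) : K) =
      p * ∑ k ∈ range (n + 1),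
        (n.choose k : K) * p ^ k * (1 - p) ^ (n - k) * (h (k + 1) / ((k + 1 : ℕ) : K)) := by
  rw [binomialTransform_eq_sum_range, sum_div, mul_sum]
  refine sum_congr rfl fun k _ => ?_
  have absorption : ((n : K) + 1) * n.choose k = (n + 1).choose (k + 1) * ((k : K) + 1) := by
    exact_mod_cast Nat.add_one_mul_choose_eq n k
  rw [Nat.add_sub_add_right]
  push_cast
  field_simp
  linear_combination -(p * p ^ k * (1 - p) ^ (n - k) * h (k + 1)) * absorption

lemma binomialTransform_discountedSum (p q : K) (h : ℕ → K) :
    binomialTransform p (discountedSum q h) =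
      discountedSum (1 - p + p * q) (binomialTransform p h) := by
  funext n
  induction n with
  | zero => simp [binomialTransform, discountedSum]
  | succ n ih =>
    have tail : p * ∑ k ∈ range (n + 1),
          (n.choose k : K) * p ^ k * (1 - p) ^ (n - k) * discountedSum q h (k + 1) =
        p * q * binomialTransform p (discountedSum q h) n +
          binomialTransform p h (n + 1) / ((n + 1 : ℕ) : K) := by
      rw [binomialTransform_succ_div,
        binomialTransform_eq_sum_range_succ p (discountedSum_apply_zero q h), mul_assoc, ← mul_add,
        mul_sum _ _ q, ← sum_add_distrib]
      refine congrArg (p * ·) (sum_congr rfl fun k _ => ?_)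
      rw [discountedSum_apply_succ]
      ring
    rw [binomialTransform_succ, tail, discountedSum_apply_succ, ← ih]
    ring

lemma binomialTransform_blockOperator (p q : K) (e : ℕ) (h : ℕ → K) :
    binomialTransform p (blockOperator q e h) =
      blockOperator (1 - p + p * q) e (binomialTransform p h) := by
  have semiconj : Function.Semiconj (binomialTransform p) (discountedSum q)
      (discountedSum (1 - p + p * q)) := binomialTransform_discountedSum p q
  rw [blockOperator, binomialTransform_discountedSum, semiconj.iterate_right, mul_one,
    sub_add_cancel, blockOperator]

lemma binomialTransform_foldr_blockOperator (p q : K) (s : List ℕ) (h : ℕ → K) :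
    binomialTransform p (s.foldr (blockOperator q) h) =
      s.foldr (blockOperator (1 - p + p * q)) (binomialTransform p h) :=
  (List.foldr_hom (binomialTransform p)
    fun e h => (binomialTransform_blockOperator p q e h).symm).symm

end Operators

/-- The last of the numbers `n, t 0, …, t (L - 1)`; it bounds the entry that may follow `t` in a
decreasing tuple below `n`. -/
def bottom (n : ℕ) : {L : ℕ} → (Fin L → ℕ) → ℕ
  | 0, _ => n
  | L + 1, t => t (Fin.last L)

lemma bottom_snoc (n j : ℕ) {L : ℕ} (t : Fin L → ℕ) :
    bottom n (Fin.snoc t j : Fin (L + 1) → ℕ) = j :=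
  Fin.snoc_last (α := fun _ => ℕ) j t

lemma ent_apply {L : ℕ} (t : Fin L → ℕ) (i : Fin L) : ent t i = t i := by
  simp [ent]

lemma ent_last_eq_bottom (n : ℕ) {L : ℕ} (t : Fin (L + 1) → ℕ) : ent t L = bottom n t :=
  ent_apply t (Fin.last L)

lemma ent_snoc_of_lt (j : ℕ) {L i : ℕ} (t : Fin L → ℕ) (hi : i < L) :
    ent (Fin.snoc t j : Fin (L + 1) → ℕ) i = ent t i := by
  simp [ent, Fin.snoc, hi, hi.trans (Nat.lt_succ_self L)]

lemma ent_snoc_last (j : ℕ) {L : ℕ} (t : Fin L → ℕ) :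
    ent (Fin.snoc t j : Fin (L + 1) → ℕ) L = j := by
  rw [ent_last_eq_bottom 0, bottom_snoc]

lemma mem_Idx_iff {n L : ℕ} {t : Fin L → ℕ} :
    t ∈ Idx n L ↔ (∀ i, 1 ≤ t i ∧ t i ≤ n) ∧ Antitone t := by
  simp [Idx, Antitone]

lemma Idx_zero (n : ℕ) : Idx n 0 = {Fin.elim0} := by
  ext t
  simp [mem_Idx_iff, Subsingleton.elim t Fin.elim0, Subsingleton.antitone]

lemma ent_le_ent {n L : ℕ} {t : Fin L → ℕ} (ht : t ∈ Idx n L) {i j : ℕ} (hij : i ≤ j)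
    (hj : j < L) : ent t j ≤ ent t i := by
  rw [ent, ent, dif_pos hj, dif_pos (hij.trans_lt hj)]
  exact (mem_Idx_iff.1 ht).2 hij

lemma le_bottom_iff {n L j : ℕ} {t : Fin L → ℕ} (ht : t ∈ Idx n L) :
    j ≤ bottom n t ↔ j ≤ n ∧ ∀ i, j ≤ t i := by
  obtain ⟨hbound, hanti⟩ := mem_Idx_iff.1 ht
  cases L with
  | zero => simp [bottom]
  | succ L =>
    exact ⟨fun h => ⟨h.trans (hbound _).2, fun i => h.trans (hanti (Fin.le_last i))⟩,
      fun h => h.2 _⟩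

lemma antitone_snoc_iff {α : Type*} [Preorder α] {L : ℕ} {t : Fin L → α} {j : α} :
    Antitone (Fin.snoc t j : Fin (L + 1) → α) ↔ Antitone t ∧ ∀ i, j ≤ t i := by
  simp only [Antitone, Fin.forall_fin_succ', Fin.snoc_castSucc, Fin.snoc_last,
    Fin.castSucc_le_castSucc_iff, Fin.le_last, Fin.last_le_iff, Fin.castSucc_ne_last,
    forall_true_left, IsEmpty.forall_iff, le_refl, implies_true, and_true, forall_and]

lemma snoc_mem_Idx_iff {n L j : ℕ} {t : Fin L → ℕ} :
    (Fin.snoc t j : Fin (L + 1) → ℕ) ∈ Idx n (L + 1) ↔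
      t ∈ Idx n L ∧ j ∈ Icc 1 (bottom n t) := by
  have split : (Fin.snoc t j : Fin (L + 1) → ℕ) ∈ Idx n (L + 1) ↔
      t ∈ Idx n L ∧ 1 ≤ j ∧ j ≤ n ∧ ∀ i, j ≤ t i := by
    simp only [mem_Idx_iff, antitone_snoc_iff, Fin.forall_fin_succ', Fin.snoc_castSucc,
      Fin.snoc_last]
    tauto
  rw [split, mem_Icc]
  exact and_congr_right fun ht => by rw [le_bottom_iff ht]

lemma sum_Idx_succ {R : Type*} [AddCommMonoid R] (n L : ℕ) (F : (Fin (L + 1) → ℕ) → R) :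
    ∑ t ∈ Idx n (L + 1), F t =
      ∑ t ∈ Idx n L, ∑ j ∈ Icc 1 (bottom n t), F (Fin.snoc t j) := by
  rw [sum_sigma']
  refine (sum_bij' (fun x _ => Fin.snoc x.1 x.2) (fun t _ => ⟨Fin.init t, t (Fin.last L)⟩)
    ?_ ?_ ?_ ?_ ?_).symm
  · exact fun x hx => snoc_mem_Idx_iff.2 (mem_sigma.1 hx)
  · intro t ht
    rw [← Fin.snoc_init_self t] at ht
    exact mem_sigma.2 (snoc_mem_Idx_iff.1 ht)
  · simp
  · simp
  · simp

lemma Qs_append_singleton (s : List ℕ) (e : ℕ) {L : ℕ} (t : Fin L → ℕ) :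
    Qs (s ++ [e + 1]) t = Qs s t + (ent t s.sum - ent t (s.sum + e)) := by
  rw [Qs, List.length_append, List.length_singleton, sum_range_succ, Qs]
  congr 1
  · refine sum_congr rfl fun r hr => ?_
    have hr := mem_range.1 hr
    rw [List.take_append_of_le_length hr.le, List.take_append_of_le_length hr]
  · rw [List.take_left, List.take_of_length_le (by simp), List.sum_append, List.sum_singleton,
      ← add_assoc, Nat.add_sub_cancel]

lemma Qs_snoc {s : List ℕ} (hs : ∀ e ∈ s, 1 ≤ e) (j : ℕ) {L : ℕ} (hL : s.sum ≤ L)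
    (t : Fin L → ℕ) : Qs s (Fin.snoc t j : Fin (L + 1) → ℕ) = Qs s t := by
  refine sum_congr rfl fun r hr => ?_
  have hr := mem_range.1 hr
  have block_sum : (s.take (r + 1)).sum = (s.take r).sum + s[r] := by
    rw [List.sum_take_succ _ _ hr]
  have block_pos : 1 ≤ s[r] := hs _ (List.getElem_mem hr)
  have prefix_le : (s.take (r + 1)).sum ≤ s.sum := (List.take_sublist _ _).sum_le_sum (by simp)
  rw [ent_snoc_of_lt j t (by omega), ent_snoc_of_lt j t (by omega)]

lemma Qs_append_one_snoc {s : List ℕ} (hs : ∀ e ∈ s, 1 ≤ e) (j : ℕ) (t : Fin s.sum → ℕ) :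
    Qs (s ++ [1]) (Fin.snoc t j : Fin (s.sum + 1) → ℕ) = Qs s t := by
  rw [Qs_append_singleton s 0, Qs_snoc hs j le_rfl, add_zero, Nat.sub_self, add_zero]

lemma Qs_append_add_two_snoc {s : List ℕ} (hs : ∀ e ∈ s, 1 ≤ e) {n e j : ℕ}
    {t : Fin (s.sum + e + 1) → ℕ} (ht : t ∈ Idx n (s.sum + e + 1)) (hj : j ≤ bottom n t) :
    Qs (s ++ [e + 2]) (Fin.snoc t j : Fin (s.sum + e + 1 + 1) → ℕ) =
      Qs (s ++ [e + 1]) t + (bottom n t - j) := by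
  have hle : bottom n t ≤ ent t s.sum := by
    rw [← ent_last_eq_bottom]
    exact ent_le_ent ht (by omega) (by omega)
  rw [Qs_append_singleton s (e + 1), Qs_append_singleton s e, Qs_snoc hs j (by omega),
    ent_snoc_of_lt j t (by omega), ← add_assoc s.sum, ent_snoc_last, ent_last_eq_bottom n t]
  omega

section NestedSums

variable {K : Type*} [Field K]

lemma sum_Idx_discountedSum (q : K) (h : ℕ → K) (n L : ℕ) (w : (Fin L → ℕ) → K)
    (w' : (Fin (L + 1) → ℕ) → K)
    (hw : ∀ t ∈ Idx n L, ∀ j ∈ Icc 1 (bottom n t),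
      w' (Fin.snoc t j) = w t * q ^ (bottom n t - j)) :
    ∑ t ∈ Idx n L, w t * (discountedSum q h (bottom n t) / ∏ i, (t i : K)) =
      ∑ t ∈ Idx n (L + 1), w' t * (h (bottom n t) / ∏ i, (t i : K)) := by
  rw [sum_Idx_succ]
  refine sum_congr rfl fun t ht => ?_
  rw [discountedSum, sum_div, mul_sum]
  refine sum_congr rfl fun j hj => ?_
  rw [hw t ht j hj, bottom_snoc, Fin.prod_univ_castSucc]
  simp only [Fin.snoc_castSucc, Fin.snoc_last]
  field_simp

theorem foldr_blockOperator_eq_sum_Idx (q : K) {s : List ℕ} (hs : ∀ e ∈ s, 1 ≤ e) (h : ℕ → K)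
    (n : ℕ) {L : ℕ} (hL : L = s.sum) :
    s.foldr (blockOperator q) h n =
      ∑ t ∈ Idx n L, q ^ Qs s t * (h (bottom n t) / ∏ i, (t i : K)) := by
  induction s using List.reverseRecOn generalizing h L with
  | nil =>
    obtain rfl : L = 0 := hL
    simp [Idx_zero, Qs, bottom]
  | append_singleton s e ih =>
    have hs' : ∀ e ∈ s, 1 ≤ e := fun e he => hs e (List.mem_append_left _ he)
    obtain ⟨e, rfl⟩ := Nat.exists_eq_add_of_le' (hs e (by simp))
    clear hs
    rw [List.sum_append, List.sum_singleton] at hL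
    induction e generalizing h L with
    | zero =>
      subst hL
      rw [zero_add, List.foldr_concat, blockOperator_one, ih hs' _ rfl]
      refine sum_Idx_discountedSum 1 h n s.sum _ _ fun t _ j _ => ?_
      rw [Qs_append_one_snoc hs', one_pow, mul_one]
    | succ e ihe =>
      subst hL
      rw [List.foldr_concat, blockOperator_add_two, ← List.foldr_concat, ihe _ rfl]
      refine sum_Idx_discountedSum q h n (s.sum + e + 1) _ _ fun t ht j hj => ?_
      rw [Qs_append_add_two_snoc hs' ht (mem_Icc.1 hj).2, pow_add]

lemma foldr_blockOperator_zero_ofFn {d : ℕ} (σ : Fin d → ℕ) (hσ : ∀ i, 1 ≤ σ i) (h : ℕ → K)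
    (n : ℕ) :
    (List.ofFn σ).foldr (blockOperator 0) h n =
      ∑ t ∈ Idx n d, h (bottom n t) / ∏ i, (t i : K) ^ σ i := by
  induction d generalizing h with
  | zero => simp [Idx_zero, bottom]
  | succ d ih =>
    rw [List.ofFn_succ', List.concat_eq_append, List.foldr_concat, ih _ fun i => hσ i.castSucc,
      sum_Idx_succ]
    refine sum_congr rfl fun t _ => ?_
    rw [blockOperator_zero (hσ _), sum_div]
    refine sum_congr rfl fun j _ => ?_
    rw [bottom_snoc, Fin.prod_univ_castSucc]
    simp only [Fin.snoc_castSucc, Fin.snoc_last]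
    rw [div_div, mul_comm]

end NestedSums

lemma zetaStarK_eq_foldr_blockOperator (k : ℕ) {s : List ℕ} (hd : s ≠ []) (hs : ∀ e ∈ s, 1 ≤ e)
    (a : ℝ) : zetaStarK k s a = s.foldr (blockOperator 0) (a ^ ·) k := by
  have expansion := foldr_blockOperator_zero_ofFn s.get (fun i => hs _ (s.get_mem i)) (a ^ ·) k
  rw [List.ofFn_get] at expansion
  rw [expansion, zetaStarK]
  obtain ⟨e, s, rfl⟩ := List.exists_cons_of_ne_nil hd
  exact sum_congr rfl fun t _ => by rw [← ent_last_eq_bottom k t]; rfl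

lemma M_eq_foldr_blockOperator (n : ℕ) {s : List ℕ} (hd : s ≠ []) (hs : ∀ e ∈ s, 1 ≤ e)
    (a p : ℝ) :
    M n s a p = s.foldr (blockOperator (1 - p)) (binomialTransform p (a ^ ·)) n := by
  have transform : M n s a p = binomialTransform p (s.foldr (blockOperator 0) (a ^ ·)) n := by
    simp only [M, binomialTransform, zetaStarK_eq_foldr_blockOperator _ hd hs]
  rw [transform, binomialTransform_foldr_blockOperator, mul_zero, add_zero]

theorem M_eq_sum_Idx (n : ℕ) {s : List ℕ} (hd : s ≠ []) (hs : ∀ e ∈ s, 1 ≤ e) (a p : ℝ) :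
    M n s a p = ∑ t ∈ Idx n (s.sum + 1),
      ((ent t (s.sum - 1)).choose (ent t s.sum) : ℝ) *
          (a ^ ent t s.sum / ∏ i ∈ range s.sum, (ent t i : ℝ)) *
        (p ^ ent t s.sum * (1 - p) ^ (Qs s t + ent t (s.sum - 1) - ent t s.sum)) := by
  obtain ⟨w, hw⟩ := Nat.exists_eq_add_of_le' (List.sum_pos s hs hd)
  rw [M_eq_foldr_blockOperator n hd hs, foldr_blockOperator_eq_sum_Idx _ hs _ n hw.symm, hw,
    sum_Idx_succ n (w + 1)]
  refine sum_congr rfl fun t _ => ?_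
  rw [binomialTransform, sum_div, mul_sum]
  refine sum_congr rfl fun j hj => ?_
  have hj := (mem_Icc.1 hj).2
  rw [Qs_snoc hs j hw.le, ent_snoc_last, Nat.add_sub_cancel, ent_snoc_of_lt j t (by omega),
    ent_last_eq_bottom n, Nat.add_sub_assoc hj, pow_add, ← Fin.prod_univ_eq_prod_range
      (fun i => (ent _ i : ℝ))]
  simp only [ent_snoc_of_lt j t (Fin.is_lt _), ent_apply]
  ring

lemma integral_pow_mul_one_sub_pow (j m : ℕ) :
    ∫ p in (0 : ℝ)..1, p ^ j * (1 - p) ^ m = 1 / (((j + m : ℕ) + 1 : ℝ) * (j + m).choose j) := by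
  have beta := Complex.betaIntegral_eq_Gamma_mul_div (j + 1) (m + 1)
    (by simpa using j.cast_add_one_pos) (by simpa using m.cast_add_one_pos)
  have complex_form : Complex.betaIntegral (j + 1) (m + 1) =
      ((∫ p in (0 : ℝ)..1, p ^ j * (1 - p) ^ m : ℝ) : ℂ) := by
    rw [Complex.betaIntegral, ← intervalIntegral.integral_ofReal]
    simp
  rw [complex_form, Complex.Gamma_nat_eq_factorial, Complex.Gamma_nat_eq_factorial,
    show (j + 1 + (m + 1) : ℂ) = (j + m + 1 : ℕ) + 1 by push_cast; ring,
    Complex.Gamma_nat_eq_factorial] at beta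
  have real_form : ∫ p in (0 : ℝ)..1, p ^ j * (1 - p) ^ m =
      (j.factorial * m.factorial : ℝ) / (j + m + 1).factorial := by
    rw [← Complex.ofReal_inj, beta]
    push_cast
    rfl
  rw [real_form, Nat.factorial_succ, Nat.cast_add_choose]
  push_cast
  field_simp

lemma integral_binomialTransform (h : ℕ → ℝ) (n : ℕ) :
    ∫ p in (0 : ℝ)..1, binomialTransform p h n = 1 / (n + 1 : ℝ) * ∑ k ∈ Icc 1 n, h k := by
  simp only [binomialTransform]
  rw [intervalIntegral.integral_finsetSum
    fun _ _ => Continuous.intervalIntegrable (by fun_prop) _ _, mul_sum]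
  refine sum_congr rfl fun k hk => ?_
  obtain ⟨m, rfl⟩ := Nat.exists_eq_add_of_le (mem_Icc.1 hk).2
  have hchoose : ((k + m).choose k : ℝ) ≠ 0 := by
    exact_mod_cast (Nat.choose_pos (Nat.le_add_right k m)).ne'
  simp only [mul_assoc, Nat.add_sub_cancel_left]
  simp only [← mul_assoc (_ ^ k), intervalIntegral.integral_const_mul,
    intervalIntegral.integral_mul_const, integral_pow_mul_one_sub_pow]
  field_simp

/-- Transformation of the arithmetic mean of `ζ*_k(s; a)`, `k = 1,…,n`. -/
theorem stmt_18 (n : ℕ) (hn : 0 < n) (a : ℝ) (s : List ℕ) (hd : s ≠ [])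
    (hpos : ∀ e ∈ s, 1 ≤ e) :
    1 / (n + 1 : ℝ) * ∑ k ∈ Finset.Icc 1 n, zetaStarK k s a =
      ∑ t ∈ Idx n (s.sum + 1),
        ((ent t (s.sum - 1)).choose (ent t s.sum) : ℝ) /
            ((Qs s t + ent t (s.sum - 1)).choose (ent t s.sum) : ℝ) *
          (a ^ ent t s.sum /
            (((Qs s t : ℝ) + (ent t (s.sum - 1) : ℝ) + 1) *
              ∏ i ∈ Finset.range s.sum, (ent t i : ℝ))) := by
  rw [← integral_binomialTransform]
  change ∫ p in (0 : ℝ)..1, M n s a p = _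
  simp only [M_eq_sum_Idx n hd hpos]
  rw [intervalIntegral.integral_finsetSum
    fun _ _ => Continuous.intervalIntegrable (by fun_prop) _ _]
  refine sum_congr rfl fun t ht => ?_
  have hle : ent t s.sum ≤ Qs s t + ent t (s.sum - 1) :=
    le_add_left (ent_le_ent ht (Nat.sub_le _ _) (Nat.lt_succ_self _))
  rw [intervalIntegral.integral_const_mul, integral_pow_mul_one_sub_pow,
    Nat.add_sub_cancel' hle]
  push_cast
  simp only [div_eq_mul_inv, mul_inv]
  ring
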